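/- Let f be a bounded measurable axisymmetric function on ℝ³, even in x₃, supported in the closed ball B̄₂. Then L⁻¹f ∈ C^{1,β}(B̄₂) for every 0 < β < 1, and there is a constant C > 0 independent of f such that |(L⁻¹f)(z)| + |∇(L⁻¹f)(z)| ≤ C ‖f‖_{L∞(B₂)} |z| for every z ∈ B₂. -/

import Mathlib

noncomputable section

open MeasureTheory Metric Set Filter

/-- ℝ³ with the Euclidean norm. -/
abbrev E3 := EuclideanSpace ℝ (Fin 3)
/-- ℝ⁵ with the Euclidean norm. -/
abbrev E5 := EuclideanSpace ℝ (Fin 5)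

/-- Build a vector of ℝ³ from its coordinates. -/
def mk3 (a b c : ℝ) : E3 := (WithLp.equiv 2 (Fin 3 → ℝ)).symm ![a, b, c]
/-- Build a vector of ℝ⁵ from its coordinates. -/
def mk5 (a b c d e : ℝ) : E5 := (WithLp.equiv 2 (Fin 5 → ℝ)).symm ![a, b, c, d, e]

/-- The cylindrical radius r = √(x₁² + x₂²). -/
def cylRad (x : E3) : ℝ := Real.sqrt ((x 0)^2 + (x 1)^2)

/-- The reflection (x₁, x₂, x₃) ↦ (x₁, x₂, −x₃). -/
def reflect3 (x : E3) : E3 := mk3 (x 0) (x 1) (-(x 2))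

/-- Axisymmetric: a function of (r, x₃) only. -/
def Axisym (f : E3 → ℝ) : Prop := ∃ F : ℝ → ℝ → ℝ, ∀ x, f x = F (cylRad x) (x 2)

/-- Even in x₃. -/
def EvenZ (f : E3 → ℝ) : Prop := ∀ x, f (reflect3 x) = f x

/-- Five-dimensional extension of an axisymmetric function on ℝ³. -/
def tilde (f : E3 → ℝ) (y : E5) : ℝ :=
  f (mk3 (Real.sqrt ((y 0)^2 + (y 1)^2 + (y 2)^2 + (y 3)^2)) 0 (y 4))

/-- The embedding (x₁,x₂,x₃) ↦ (x₁,x₂,0,0,x₃) of ℝ³ into ℝ⁵. -/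
def emb (x : E3) : E5 := mk5 (x 0) (x 1) 0 0 (x 2)

/-- The operator L⁻¹, given by
(L⁻¹f)(x) = C₅ (x₁²+x₂²) ∫_{ℝ⁵} |(x₁,x₂,0,0,x₃) − y|⁻³ f̃(y) dy. -/
def Linv (C₅ : ℝ) (f : E3 → ℝ) (x : E3) : ℝ :=
  C₅ * ((x 0)^2 + (x 1)^2) * ∫ y : E5, (‖emb x - y‖ ^ 3)⁻¹ * tilde f y

/-!
Up to the weight `C₅ (x₁² + x₂²)`, `L⁻¹f` is the pullback along an isometry `ℝ³ → ℝ⁵` of the Riesz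
potential of order 3 of the extension of `f`. The gradient of `‖x‖⁻³` is homogeneous of degree
`-4`, and its `β`-Hölder quotients are controlled by `‖x‖ ^ (-(4 + β))`, which is locally
integrable in dimension 5 exactly when `β < 1`. Hence the potential is differentiable with a
bounded, `β`-Hölder gradient, all bounds depending on the density only through its supremum and its
`L¹` norm. The weight and its derivative both vanish at the origin and are Lipschitz on balls,
which gives the factor `|z|`.
-/

open scoped NNReal Topology RealInnerProductSpace

section Interpolation

variable {h t q β : ℝ}

lemma mul_rpow_neg_le_rpow_mul_rpow_neg (hh : 0 ≤ h) (hht : h ≤ t) (ht : 0 < t) (hβ : 0 ≤ β)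
    (hβ1 : β ≤ 1) : h * t ^ (-(q + 1)) ≤ h ^ β * t ^ (-(q + β)) := by
  have hsplit : h = h ^ β * h ^ (1 - β) := by
    rw [← Real.rpow_add_of_nonneg hh hβ (by linarith), add_sub_cancel, Real.rpow_one]
  calc h * t ^ (-(q + 1)) = h ^ β * (h ^ (1 - β) * t ^ (-(q + 1))) := by
        rw [← mul_assoc, ← hsplit]
    _ ≤ h ^ β * (t ^ (1 - β) * t ^ (-(q + 1))) := by gcongr
    _ = h ^ β * t ^ (-(q + β)) := by rw [← Real.rpow_add ht]; ring_nf

lemma rpow_neg_le_rpow_mul_rpow_neg (ht : 0 < t) (hth : t ≤ h) (hβ : 0 ≤ β) :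
    t ^ (-q) ≤ h ^ β * t ^ (-(q + β)) :=
  calc t ^ (-q) = t ^ β * t ^ (-(q + β)) := by rw [← Real.rpow_add ht]; ring_nf
    _ ≤ h ^ β * t ^ (-(q + β)) := by gcongr

lemma rpow_neg_sub_rpow_neg_le {s : ℝ} (hs : 0 < s) (hst : s ≤ t) (hq : 0 ≤ q) :
    s ^ (-q) - t ^ (-q) ≤ q * (t - s) * s ^ (-(q + 1)) := by
  have hts : 0 < t / s := div_pos (hs.trans_le hst) hs
  have bernoulli : 1 - q * (t / s - 1) ≤ (t / s) ^ (-q) := by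
    rw [Real.rpow_def_of_pos hts]
    have hlog := mul_le_mul_of_nonneg_left (Real.log_le_sub_one_of_pos hts) hq
    linarith [Real.add_one_le_exp (Real.log (t / s) * -q)]
  calc s ^ (-q) - t ^ (-q) = s ^ (-q) * (1 - (t / s) ^ (-q)) := by
        rw [Real.div_rpow (hs.trans_le hst).le hs.le, mul_sub, mul_one,
          mul_div_cancel₀ _ (Real.rpow_pos_of_pos hs _).ne']
    _ ≤ s ^ (-q) * (q * (t / s - 1)) := by gcongr; linarith
    _ = q * (t - s) * s ^ (-(q + 1)) := by
        rw [neg_add', Real.rpow_sub_one hs.ne']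
        field_simp

end Interpolation

/-- The radial field `x ↦ ‖x‖ ^ (-q) (x / ‖x‖)`, homogeneous of degree `-q`: up to a constant
factor it is the gradient of the Riesz kernel `‖x‖ ^ (1 - q)`. -/
def radialField {E : Type*} [NormedAddCommGroup E] [NormedSpace ℝ E] (q : ℝ) (x : E) : E :=
  ‖x‖ ^ (-(q + 1)) • x

section RadialField

variable {E : Type*} [NormedAddCommGroup E] [NormedSpace ℝ E] {q β : ℝ} {a b : E}

lemma norm_radialField (ha : a ≠ 0) : ‖radialField q a‖ = ‖a‖ ^ (-q) := by
  have hpos : 0 < ‖a‖ := norm_pos_iff.2 ha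
  rw [radialField, norm_smul, Real.norm_of_nonneg (by positivity), neg_add',
    Real.rpow_sub_one hpos.ne', div_mul_cancel₀ _ hpos.ne']

lemma norm_radialField_le (x : E) : ‖radialField q x‖ ≤ ‖x‖ ^ (-q) := by
  rcases eq_or_ne x 0 with rfl | hx
  · rw [radialField, smul_zero, norm_zero]
    positivity
  · exact (norm_radialField hx).le

lemma norm_radialField_sub_le_mul_norm_sub (ha : a ≠ 0) (hab : ‖a‖ ≤ ‖b‖) (hq : 0 ≤ q) :
    ‖radialField q a - radialField q b‖ ≤ (q + 2) * (‖a - b‖ * ‖a‖ ^ (-(q + 1))) := by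
  have hpos : 0 < ‖a‖ := norm_pos_iff.2 ha
  have hpos' : 0 < ‖b‖ := hpos.trans_le hab
  have hmono : ‖b‖ ^ (-(q + 1)) ≤ ‖a‖ ^ (-(q + 1)) :=
    Real.rpow_le_rpow_of_nonpos hpos hab (by linarith)
  have hdecomp : radialField q a - radialField q b
      = ‖a‖ ^ (-(q + 1)) • (a - b) + (‖a‖ ^ (-(q + 1)) - ‖b‖ ^ (-(q + 1))) • b := by
    simp only [radialField]
    module
  have hcoeff : (‖a‖ ^ (-(q + 1)) - ‖b‖ ^ (-(q + 1))) * ‖b‖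
      ≤ (q + 1) * (‖a - b‖ * ‖a‖ ^ (-(q + 1))) :=
    calc (‖a‖ ^ (-(q + 1)) - ‖b‖ ^ (-(q + 1))) * ‖b‖
        = (‖b‖ - ‖a‖) * ‖a‖ ^ (-(q + 1)) + (‖a‖ ^ (-q) - ‖b‖ ^ (-q)) := by
          rw [neg_add', Real.rpow_sub_one hpos.ne', Real.rpow_sub_one hpos'.ne']
          field_simp
          ring
      _ ≤ (‖b‖ - ‖a‖) * ‖a‖ ^ (-(q + 1)) + q * (‖b‖ - ‖a‖) * ‖a‖ ^ (-(q + 1)) := by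
          gcongr
          exact rpow_neg_sub_rpow_neg_le hpos hab hq
      _ = (q + 1) * ((‖b‖ - ‖a‖) * ‖a‖ ^ (-(q + 1))) := by ring
      _ ≤ (q + 1) * (‖a - b‖ * ‖a‖ ^ (-(q + 1))) := by
          gcongr
          exact norm_sub_rev a b ▸ norm_sub_norm_le b a
  calc ‖radialField q a - radialField q b‖
      ≤ ‖a‖ ^ (-(q + 1)) * ‖a - b‖ + (‖a‖ ^ (-(q + 1)) - ‖b‖ ^ (-(q + 1))) * ‖b‖ := by
        rw [hdecomp]
        refine (norm_add_le _ _).trans_eq ?_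
        rw [norm_smul, norm_smul, Real.norm_of_nonneg (by positivity),
          Real.norm_of_nonneg (sub_nonneg.2 hmono)]
    _ ≤ (q + 2) * (‖a - b‖ * ‖a‖ ^ (-(q + 1))) := by linarith

lemma norm_radialField_sub_le_of_norm_le (ha : a ≠ 0) (hab : ‖a‖ ≤ ‖b‖) (hq : 0 ≤ q) (hβ : 0 ≤ β)
    (hβ1 : β ≤ 1) :
    ‖radialField q a - radialField q b‖ ≤ (q + 2) * (‖a - b‖ ^ β * ‖a‖ ^ (-(q + β))) := by
  have hpos : 0 < ‖a‖ := norm_pos_iff.2 ha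
  rcases le_total ‖a - b‖ ‖a‖ with hle | hle
  · exact (norm_radialField_sub_le_mul_norm_sub ha hab hq).trans <| mul_le_mul_of_nonneg_left
      (mul_rpow_neg_le_rpow_mul_rpow_neg (norm_nonneg _) hle hpos hβ hβ1) (by linarith)
  · have hmono : ‖b‖ ^ (-q) ≤ ‖a‖ ^ (-q) := Real.rpow_le_rpow_of_nonpos hpos hab (by linarith)
    calc ‖radialField q a - radialField q b‖
        ≤ ‖a‖ ^ (-q) + ‖b‖ ^ (-q) :=
          norm_sub_le_of_le (norm_radialField_le a) (norm_radialField_le b)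
      _ ≤ (q + 2) * ‖a‖ ^ (-q) := by nlinarith [Real.rpow_nonneg hpos.le (-q)]
      _ ≤ (q + 2) * (‖a - b‖ ^ β * ‖a‖ ^ (-(q + β))) := by
          gcongr
          exact rpow_neg_le_rpow_mul_rpow_neg hpos hle hβ

lemma norm_radialField_sub_le (ha : a ≠ 0) (hb : b ≠ 0) (hq : 0 ≤ q) (hβ : 0 ≤ β) (hβ1 : β ≤ 1) :
    ‖radialField q a - radialField q b‖
      ≤ (q + 2) * (‖a - b‖ ^ β * (‖a‖ ^ (-(q + β)) + ‖b‖ ^ (-(q + β)))) := by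
  wlog hab : ‖a‖ ≤ ‖b‖ generalizing a b
  · rw [norm_sub_rev, norm_sub_rev a b, add_comm (‖a‖ ^ _)]
    exact this hb ha (le_of_not_ge hab)
  · refine (norm_radialField_sub_le_of_norm_le ha hab hq hβ hβ1).trans ?_
    gcongr
    exact le_add_of_nonneg_right (by positivity)

lemma norm_radialField_sub_le_of_half_norm_le (hb : b ≠ 0) (hab : ‖b‖ / 2 ≤ ‖a‖) (hq : 0 ≤ q)
    (hβ : 0 ≤ β) (hβ1 : β ≤ 1) :
    ‖radialField q a - radialField q b‖
      ≤ (q + 2) * (2 * 2 ^ (q + β)) * (‖a - b‖ ^ β * ‖b‖ ^ (-(q + β))) := by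
  have hbpos : 0 < ‖b‖ := norm_pos_iff.2 hb
  have half_rpow : (‖b‖ / 2) ^ (-(q + β)) = 2 ^ (q + β) * ‖b‖ ^ (-(q + β)) := by
    rw [Real.div_rpow hbpos.le zero_le_two, Real.rpow_neg zero_le_two, div_inv_eq_mul, mul_comm]
  have rpow_le : ∀ c : E, ‖b‖ / 2 ≤ ‖c‖ →
      ‖c‖ ^ (-(q + β)) ≤ 2 ^ (q + β) * ‖b‖ ^ (-(q + β)) := fun c hc ↦
    half_rpow ▸ Real.rpow_le_rpow_of_nonpos (half_pos hbpos) hc (by linarith)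
  have ha : a ≠ 0 := norm_pos_iff.1 ((half_pos hbpos).trans_le hab)
  calc ‖radialField q a - radialField q b‖
      ≤ (q + 2) * (‖a - b‖ ^ β * (‖a‖ ^ (-(q + β)) + ‖b‖ ^ (-(q + β)))) :=
        norm_radialField_sub_le ha hb hq hβ hβ1
    _ ≤ (q + 2) * (‖a - b‖ ^ β *
          (2 ^ (q + β) * ‖b‖ ^ (-(q + β)) + 2 ^ (q + β) * ‖b‖ ^ (-(q + β)))) := by
        gcongr
        · exact rpow_le a hab
        · exact rpow_le b (by linarith)
    _ = (q + 2) * (2 * 2 ^ (q + β)) * (‖a - b‖ ^ β * ‖b‖ ^ (-(q + β))) := by ring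

end RadialField

section KernelTaylor

variable {E : Type*} [NormedAddCommGroup E] [InnerProductSpace ℝ E] {p β : ℝ} {a b : E}

lemma hasGradientAt_norm_rpow_neg [CompleteSpace E] (p : ℝ) {x : E} (hx : x ≠ 0) :
    HasGradientAt (fun y : E ↦ ‖y‖ ^ (-p)) (-p • radialField (p + 1) x) x := by
  have hsq : (fun y : E ↦ ‖y‖ ^ (-p)) = fun y ↦ (‖y‖ ^ 2) ^ (-p / 2) := by
    ext y
    rw [← Real.rpow_natCast_mul (norm_nonneg y)]
    push_cast
    ring_nf
  rw [hsq, hasGradientAt_iff_hasFDerivAt]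
  refine ((hasStrictFDerivAt_norm_sq x).hasFDerivAt.rpow_const
    (Or.inl (by simpa using hx))).congr_fderiv ?_
  ext v
  have hexp : (‖x‖ ^ 2) ^ (-p / 2 - 1) = ‖x‖ ^ (-(p + 1 + 1)) := by
    rw [← Real.rpow_natCast_mul (norm_nonneg x)]
    push_cast
    ring_nf
  simp only [hexp, radialField, _root_.smul_apply, innerSL_apply_apply, map_smul,
    InnerProductSpace.toDual_apply_apply, smul_eq_mul, nsmul_eq_mul]
  push_cast
  ring

lemma abs_norm_rpow_neg_taylor_le_of_far [CompleteSpace E] (hb : b ≠ 0)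
    (hab : 2 * ‖a - b‖ ≤ ‖b‖) (hp : 0 ≤ p) (hβ : 0 ≤ β) (hβ1 : β ≤ 1) :
    |‖a‖ ^ (-p) - ‖b‖ ^ (-p) - ⟪-p • radialField (p + 1) b, a - b⟫|
      ≤ p * ((p + 1 + 2) * (2 * 2 ^ (p + 1 + β))) *
        (‖a - b‖ ^ (1 + β) * ‖b‖ ^ (-(p + 1 + β))) := by
  have hbpos : 0 < ‖b‖ := norm_pos_iff.2 hb
  have norm_sub_le : ∀ c ∈ segment ℝ b a, ‖c - b‖ ≤ ‖a - b‖ := fun c hc ↦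
    norm_sub_le_of_mem_segment hc
  have half_le_norm : ∀ c ∈ segment ℝ b a, ‖b‖ / 2 ≤ ‖c‖ := fun c hc ↦ by
    linarith [norm_sub_le c hc, norm_sub_norm_le b c, norm_sub_rev b c]
  have ne_zero : ∀ c ∈ segment ℝ b a, c ≠ 0 := fun c hc ↦
    norm_pos_iff.1 ((half_pos hbpos).trans_le (half_le_norm c hc))
  have gradient_sub_le : ∀ c ∈ segment ℝ b a,
      ‖InnerProductSpace.toDual ℝ E (-p • radialField (p + 1) c)
        - InnerProductSpace.toDual ℝ E (-p • radialField (p + 1) b)‖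
      ≤ p * ((p + 1 + 2) * (2 * 2 ^ (p + 1 + β)) *
        (‖a - b‖ ^ β * ‖b‖ ^ (-(p + 1 + β)))) := fun c hc ↦ by
    rw [← map_sub, LinearIsometryEquiv.norm_map, ← smul_sub, norm_smul, norm_neg,
      Real.norm_of_nonneg hp]
    gcongr
    refine (norm_radialField_sub_le_of_half_norm_le hb (half_le_norm c hc) (by linarith) hβ
      hβ1).trans ?_
    gcongr
    exact norm_sub_le c hc
  refine ((convex_segment b a).norm_image_sub_le_of_norm_hasFDerivWithin_le'
    (fun c hc ↦ (hasGradientAt_norm_rpow_neg p (ne_zero c hc)).hasFDerivAt.hasFDerivWithinAt)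
    gradient_sub_le (left_mem_segment ℝ b a) (right_mem_segment ℝ b a)).trans_eq ?_
  rw [Real.rpow_one_add' (norm_nonneg _) (by linarith)]
  ring

lemma abs_norm_rpow_neg_taylor_le_of_near (ha : a ≠ 0) (hb : b ≠ 0) (hab : ‖b‖ ≤ 2 * ‖a - b‖)
    (hp : 0 ≤ p) (hβ : 0 ≤ β) :
    |‖a‖ ^ (-p) - ‖b‖ ^ (-p) - ⟪-p • radialField (p + 1) b, a - b⟫|
      ≤ (p + 1) * 3 ^ (1 + β) *
        (‖a - b‖ ^ (1 + β) * (‖a‖ ^ (-(p + 1 + β)) + ‖b‖ ^ (-(p + 1 + β)))) := by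
  have hapos : 0 < ‖a‖ := norm_pos_iff.2 ha
  have hbpos : 0 < ‖b‖ := norm_pos_iff.2 hb
  have hb3 : ‖b‖ ≤ 3 * ‖a - b‖ := by linarith [norm_nonneg (a - b)]
  have ha3 : ‖a‖ ≤ 3 * ‖a - b‖ := by linarith [norm_sub_norm_le a b]
  have kernel_le : ∀ c : E, 0 < ‖c‖ → ‖c‖ ≤ 3 * ‖a - b‖ →
      ‖c‖ ^ (-p) ≤ (3 * ‖a - b‖) ^ (1 + β) * ‖c‖ ^ (-(p + 1 + β)) := fun c hc hc3 ↦ by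
    simpa only [add_assoc] using rpow_neg_le_rpow_mul_rpow_neg hc hc3 (add_nonneg zero_le_one hβ)
  have linear_le : |⟪-p • radialField (p + 1) b, a - b⟫|
      ≤ p * ((3 * ‖a - b‖) ^ (1 + β) * ‖b‖ ^ (-(p + 1 + β))) :=
    calc |⟪-p • radialField (p + 1) b, a - b⟫|
        ≤ p * (‖b‖ ^ (-(p + 1)) * ‖a - b‖) := by
          refine (abs_real_inner_le_norm _ _).trans_eq ?_
          rw [norm_smul, norm_neg, Real.norm_of_nonneg hp, norm_radialField hb, mul_assoc]
      _ ≤ p * ((3 * ‖a - b‖) ^ β * ‖b‖ ^ (-(p + 1 + β)) * (3 * ‖a - b‖)) := by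
          gcongr
          · exact rpow_neg_le_rpow_mul_rpow_neg hbpos hb3 hβ
          · linarith [norm_nonneg (a - b)]
      _ = p * ((3 * ‖a - b‖) ^ (1 + β) * ‖b‖ ^ (-(p + 1 + β))) := by
          rw [Real.rpow_one_add' (by positivity) (by linarith)]
          ring
  have abs_norm_rpow (c : E) : |‖c‖ ^ (-p)| = ‖c‖ ^ (-p) := abs_of_nonneg (by positivity)
  calc |‖a‖ ^ (-p) - ‖b‖ ^ (-p) - ⟪-p • radialField (p + 1) b, a - b⟫|
      ≤ ‖a‖ ^ (-p) + ‖b‖ ^ (-p) + |⟪-p • radialField (p + 1) b, a - b⟫| := by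
        refine (abs_sub _ _).trans (add_le_add_left ((abs_sub _ _).trans_eq ?_) _)
        rw [abs_norm_rpow, abs_norm_rpow]
    _ ≤ (p + 1) * ((3 * ‖a - b‖) ^ (1 + β) * (‖a‖ ^ (-(p + 1 + β)) + ‖b‖ ^ (-(p + 1 + β)))) := by
        have hterm : 0 ≤ p * ((3 * ‖a - b‖) ^ (1 + β) * ‖a‖ ^ (-(p + 1 + β))) := by positivity
        linarith [kernel_le a hapos ha3, kernel_le b hbpos hb3, linear_le]
    _ = (p + 1) * 3 ^ (1 + β) *
        (‖a - b‖ ^ (1 + β) * (‖a‖ ^ (-(p + 1 + β)) + ‖b‖ ^ (-(p + 1 + β)))) := by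
        rw [Real.mul_rpow (by norm_num) (norm_nonneg _)]
        ring

lemma exists_abs_norm_rpow_neg_taylor_le (E : Type*) [NormedAddCommGroup E]
    [InnerProductSpace ℝ E] [CompleteSpace E] (hp : 0 ≤ p) (hβ : 0 ≤ β) (hβ1 : β ≤ 1) :
    ∃ C : ℝ, 0 ≤ C ∧ ∀ a b : E, a ≠ 0 → b ≠ 0 →
      |‖a‖ ^ (-p) - ‖b‖ ^ (-p) - ⟪-p • radialField (p + 1) b, a - b⟫|
        ≤ C * (‖a - b‖ ^ (1 + β) * (‖a‖ ^ (-(p + 1 + β)) + ‖b‖ ^ (-(p + 1 + β)))) := by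
  refine ⟨max (p * ((p + 1 + 2) * (2 * 2 ^ (p + 1 + β)))) ((p + 1) * 3 ^ (1 + β)), by positivity,
    fun a b ha hb ↦ ?_⟩
  rcases le_total (2 * ‖a - b‖) ‖b‖ with hab | hab
  · refine (abs_norm_rpow_neg_taylor_le_of_far hb hab hp hβ hβ1).trans ?_
    gcongr
    · exact le_max_left _ _
    · exact le_add_of_nonneg_left (by positivity)
  · refine (abs_norm_rpow_neg_taylor_le_of_near ha hb hab hp hβ).trans ?_
    gcongr
    exact le_max_right _ _

end KernelTaylor

/-- The Riesz potential `w ↦ ∫ ‖w - y‖ ^ (-p) g(y) dμ(y)` of `g`, without normalising constant. -/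
def rieszPotential {E : Type*} [NormedAddCommGroup E] [MeasurableSpace E] (μ : Measure E) (p : ℝ)
    (g : E → ℝ) (w : E) : ℝ :=
  ∫ y, ‖w - y‖ ^ (-p) * g y ∂μ

/-- The convolution of `g` with the radial field of order `q`; up to a constant factor it is the
gradient of the Riesz potential of order `q - 1`. -/
def radialPotential {E : Type*} [NormedAddCommGroup E] [NormedSpace ℝ E] [MeasurableSpace E]
    (μ : Measure E) (q : ℝ) (g : E → ℝ) (w : E) : E :=
  ∫ y, g y • radialField q (w - y) ∂μ

/-- A bound, uniform in `w`, for `∫ ‖w - y‖ ^ (-p) |g(y)| dμ(y)` when `|g| ≤ M`: the first term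
controls the part `‖w - y‖ < 1` of the integral, the second one the rest. -/
def rieszBound {E : Type*} [NormedAddCommGroup E] [MeasurableSpace E] (μ : Measure E) (p M : ℝ)
    (g : E → ℝ) : ℝ :=
  M * ∫ v in ball 0 1, ‖v‖ ^ (-p) ∂μ + ∫ y, |g y| ∂μ

section RieszPotential

variable {E : Type*} [NormedAddCommGroup E] {g : E → ℝ} {M p q β : ℝ}

lemma norm_rpow_neg_mul_abs_le (hp : 0 ≤ p) {y : E} (hy : |g y| ≤ M) (w : E) :
    ‖w - y‖ ^ (-p) * |g y|
      ≤ M * (ball 0 1).indicator (fun v : E ↦ ‖v‖ ^ (-p)) (w - y) + |g y| := by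
  by_cases hwy : w - y ∈ ball 0 1
  · rw [indicator_of_mem hwy, mul_comm]
    exact (mul_le_mul_of_nonneg_right hy (by positivity)).trans
      (le_add_of_nonneg_right (abs_nonneg _))
  · rw [indicator_of_notMem hwy, mul_zero, zero_add]
    rw [mem_ball_zero_iff, not_lt] at hwy
    exact mul_le_of_le_one_left (abs_nonneg _)
      (Real.rpow_le_one_of_one_le_of_nonpos hwy (neg_nonpos.2 hp))

lemma norm_smul_radialField_le [NormedSpace ℝ E] (y w : E) :
    ‖g y • radialField q (w - y)‖ ≤ ‖w - y‖ ^ (-q) * |g y| := by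
  rw [norm_smul, mul_comm, Real.norm_eq_abs]
  gcongr
  exact norm_radialField_le _

lemma exists_pos_le_one_add_lt {a b : ℝ} (hab : a < b) :
    ∃ β : ℝ≥0, 0 < β ∧ β ≤ 1 ∧ a + β < b := by
  obtain ⟨β, hβ, hlt⟩ := exists_between (lt_min one_pos (sub_pos.2 hab))
  obtain ⟨hβ1, hβab⟩ := lt_min_iff.1 hlt
  exact ⟨⟨β, hβ.le⟩, hβ, hβ1.le, lt_sub_iff_add_lt'.1 hβab⟩

lemma holderWith_of_dist_le {X Y : Type*} [PseudoMetricSpace X] [PseudoMetricSpace Y] {f : X → Y}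
    {C : ℝ} {r : ℝ≥0} (hf : ∀ x y, dist (f x) (f y) ≤ C * dist x y ^ (r : ℝ)) :
    HolderWith C.toNNReal r f := fun x y ↦ by
  rw [edist_dist, edist_dist, ENNReal.ofReal_rpow_of_nonneg dist_nonneg r.coe_nonneg]
  exact (ENNReal.ofReal_le_ofReal (hf x y)).trans_eq (ENNReal.ofReal_mul' (by positivity))

lemma isLittleO_sub_of_norm_le_mul_rpow {F : Type*} [NormedAddCommGroup F] {f : E → F} {w : E}
    {C : ℝ} (hβ : 0 < β) (hf : ∀ z, ‖f z‖ ≤ C * ‖z - w‖ ^ (1 + β)) :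
    f =o[𝓝 w] fun z ↦ z - w := by
  have hlim : Tendsto (fun z ↦ C * ‖z - w‖ ^ β) (𝓝 w) (𝓝 0) := by
    have hcont : Continuous fun z ↦ C * ‖z - w‖ ^ β := by fun_prop (disch := positivity)
    simpa [Real.zero_rpow hβ.ne'] using hcont.tendsto w
  refine Asymptotics.isLittleO_iff.2 fun c hc ↦ ?_
  filter_upwards [hlim.eventually_le_const hc] with z hz
  calc ‖f z‖ ≤ C * ‖z - w‖ ^ β * ‖z - w‖ := (hf z).trans_eq <| by
        rw [add_comm, Real.rpow_add_one' (norm_nonneg _) (by linarith), mul_assoc]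
    _ ≤ c * ‖z - w‖ := by gcongr

variable [MeasurableSpace E] [BorelSpace E] {μ : Measure E} [μ.IsAddHaarMeasure]

section Bounds

variable [NormedSpace ℝ E] [FiniteDimensional ℝ E]

lemma integrableOn_ball_norm_rpow_neg (hp : 0 ≤ p) (hpd : p < Module.finrank ℝ E) :
    IntegrableOn (fun v : E ↦ ‖v‖ ^ (-p)) (ball 0 1) μ := by
  have hd : 1 ≤ Module.finrank ℝ E := by exact_mod_cast hp.trans_lt hpd
  refine integrableOn_ball_of_norm_le_rpow (C := 1) hd hpd (ae_of_all _ fun v ↦ ?_)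
    (measurable_norm.pow_const (-p)).aestronglyMeasurable
  rw [one_mul, Real.norm_of_nonneg (by positivity)]

lemma integrable_indicator_comp_sub_add (hp : 0 ≤ p) (hpd : p < Module.finrank ℝ E)
    (hg : Integrable g μ) (w : E) :
    Integrable (fun y ↦
      M * (ball 0 1).indicator (fun v : E ↦ ‖v‖ ^ (-p)) (w - y) + |g y|) μ :=
  ((((integrableOn_ball_norm_rpow_neg hp hpd).integrable_indicator
    measurableSet_ball).comp_sub_left w).const_mul M).add hg.abs

lemma integrable_norm_rpow_neg_mul_abs (hp : 0 ≤ p) (hpd : p < Module.finrank ℝ E)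
    (hg : Integrable g μ) (hM : ∀ᵐ y ∂μ, |g y| ≤ M) (w : E) :
    Integrable (fun y ↦ ‖w - y‖ ^ (-p) * |g y|) μ := by
  refine (integrable_indicator_comp_sub_add (M := M) hp hpd hg w).mono'
    ((Measurable.aestronglyMeasurable (by fun_prop)).mul hg.abs.aestronglyMeasurable) ?_
  filter_upwards [hM] with y hy
  rw [Real.norm_of_nonneg (by positivity)]
  exact norm_rpow_neg_mul_abs_le hp hy w

lemma integral_norm_rpow_neg_mul_abs_le (hp : 0 ≤ p) (hpd : p < Module.finrank ℝ E)
    (hg : Integrable g μ) (hM : ∀ᵐ y ∂μ, |g y| ≤ M) (w : E) :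
    ∫ y, ‖w - y‖ ^ (-p) * |g y| ∂μ ≤ rieszBound μ p M g := by
  refine (integral_mono_ae (integrable_norm_rpow_neg_mul_abs hp hpd hg hM w)
    (integrable_indicator_comp_sub_add (M := M) hp hpd hg w)
    (hM.mono fun y hy ↦ norm_rpow_neg_mul_abs_le hp hy w)).trans_eq ?_
  have hker := ((integrableOn_ball_norm_rpow_neg (μ := μ) hp hpd).integrable_indicator
    measurableSet_ball).comp_sub_left w
  rw [integral_add (hker.const_mul M) hg.abs, integral_const_mul, rieszBound,
    integral_sub_left_eq_self ((ball 0 1).indicator fun v : E ↦ ‖v‖ ^ (-p)) μ w,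
    integral_indicator measurableSet_ball]

lemma norm_integral_le_two_mul_rieszBound {G : Type*} [NormedAddCommGroup G] [NormedSpace ℝ G]
    (hp : 0 ≤ p) (hpd : p < Module.finrank ℝ E) (hg : Integrable g μ)
    (hM : ∀ᵐ y ∂μ, |g y| ≤ M) {F : E → G} {K : ℝ} (hK : 0 ≤ K) (w z : E)
    (hF : ∀ y, w - y ≠ 0 → z - y ≠ 0 →
      ‖F y‖ ≤ K * (‖w - y‖ ^ (-p) + ‖z - y‖ ^ (-p)) * |g y|) :
    ‖∫ y, F y ∂μ‖ ≤ 2 * K * rieszBound μ p M g := by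
  have : Nontrivial E :=
    Module.nontrivial_of_finrank_pos (R := ℝ) (by exact_mod_cast hp.trans_lt hpd)
  have hint (v : E) := integrable_norm_rpow_neg_mul_abs hp hpd hg hM v
  have hF' : ∀ᵐ y ∂μ, ‖F y‖ ≤ K * (‖w - y‖ ^ (-p) * |g y| + ‖z - y‖ ^ (-p) * |g y|) := by
    filter_upwards [μ.ae_ne w, μ.ae_ne z] with y hyw hyz
    rw [← add_mul, ← mul_assoc]
    exact hF y (sub_ne_zero.2 hyw.symm) (sub_ne_zero.2 hyz.symm)
  calc ‖∫ y, F y ∂μ‖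
      ≤ ∫ y, K * (‖w - y‖ ^ (-p) * |g y| + ‖z - y‖ ^ (-p) * |g y|) ∂μ :=
        norm_integral_le_of_norm_le (((hint w).add (hint z)).const_mul K) hF'
    _ = K * (∫ y, ‖w - y‖ ^ (-p) * |g y| ∂μ + ∫ y, ‖z - y‖ ^ (-p) * |g y| ∂μ) := by
        rw [integral_const_mul, integral_add (hint w) (hint z)]
    _ ≤ K * (rieszBound μ p M g + rieszBound μ p M g) := by
        gcongr <;> exact integral_norm_rpow_neg_mul_abs_le hp hpd hg hM _
    _ = 2 * K * rieszBound μ p M g := by ring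

lemma integrable_norm_rpow_neg_mul (hp : 0 ≤ p) (hpd : p < Module.finrank ℝ E)
    (hg : Integrable g μ) (hM : ∀ᵐ y ∂μ, |g y| ≤ M) (w : E) :
    Integrable (fun y ↦ ‖w - y‖ ^ (-p) * g y) μ := by
  refine (integrable_norm_rpow_neg_mul_abs hp hpd hg hM w).mono'
    ((Measurable.aestronglyMeasurable (by fun_prop)).mul hg.aestronglyMeasurable)
    (ae_of_all _ fun y ↦ ?_)
  rw [norm_mul, Real.norm_of_nonneg (by positivity), Real.norm_eq_abs]

lemma integrable_smul_radialField (hq : 0 ≤ q) (hqd : q < Module.finrank ℝ E)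
    (hg : Integrable g μ) (hM : ∀ᵐ y ∂μ, |g y| ≤ M) (w : E) :
    Integrable (fun y ↦ g y • radialField q (w - y)) μ := by
  refine (integrable_norm_rpow_neg_mul_abs hq hqd hg hM w).mono'
    (hg.aestronglyMeasurable.smul ?_) (ae_of_all _ fun y ↦ norm_smul_radialField_le y w)
  unfold radialField
  fun_prop

lemma abs_rieszPotential_le (hp : 0 ≤ p) (hpd : p < Module.finrank ℝ E) (hg : Integrable g μ)
    (hM : ∀ᵐ y ∂μ, |g y| ≤ M) (w : E) : |rieszPotential μ p g w| ≤ rieszBound μ p M g := by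
  rw [← Real.norm_eq_abs]
  refine (norm_integral_le_of_norm_le (integrable_norm_rpow_neg_mul_abs hp hpd hg hM w)
    (ae_of_all _ fun y ↦ ?_)).trans (integral_norm_rpow_neg_mul_abs_le hp hpd hg hM w)
  rw [norm_mul, Real.norm_of_nonneg (by positivity), Real.norm_eq_abs]

lemma norm_radialPotential_le (hq : 0 ≤ q) (hqd : q < Module.finrank ℝ E) (hg : Integrable g μ)
    (hM : ∀ᵐ y ∂μ, |g y| ≤ M) (w : E) : ‖radialPotential μ q g w‖ ≤ rieszBound μ q M g :=
  (norm_integral_le_of_norm_le (integrable_norm_rpow_neg_mul_abs hq hqd hg hM w)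
    (ae_of_all _ fun y ↦ norm_smul_radialField_le y w)).trans
    (integral_norm_rpow_neg_mul_abs_le hq hqd hg hM w)

lemma norm_radialPotential_sub_le (hq : 0 ≤ q) (hβ : 0 ≤ β) (hβ1 : β ≤ 1)
    (hqβ : q + β < Module.finrank ℝ E) (hg : Integrable g μ) (hM : ∀ᵐ y ∂μ, |g y| ≤ M)
    (w z : E) :
    ‖radialPotential μ q g w - radialPotential μ q g z‖
      ≤ 2 * ((q + 2) * ‖w - z‖ ^ β) * rieszBound μ (q + β) M g := by
  have hint (v : E) := integrable_smul_radialField hq (by linarith) hg hM v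
  rw [radialPotential, radialPotential, ← integral_sub (hint w) (hint z)]
  refine norm_integral_le_two_mul_rieszBound (by positivity) hqβ hg hM (by positivity) w z
    fun y hwy hzy ↦ ?_
  have hker := norm_radialField_sub_le hwy hzy hq hβ hβ1
  rw [sub_sub_sub_cancel_right] at hker
  rw [← smul_sub, norm_smul, Real.norm_eq_abs, mul_comm |g y|, mul_assoc (q + 2)]
  gcongr

end Bounds

variable [InnerProductSpace ℝ E] [FiniteDimensional ℝ E]

lemma exists_abs_rieszPotential_taylor_le (hp : 0 ≤ p) (hβ : 0 ≤ β) (hβ1 : β ≤ 1)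
    (hpβ : p + 1 + β < Module.finrank ℝ E) (hg : Integrable g μ) (hM : ∀ᵐ y ∂μ, |g y| ≤ M) :
    ∃ C : ℝ, ∀ z w : E, |rieszPotential μ p g z - rieszPotential μ p g w
      - ⟪-p • radialPotential μ (p + 1) g w, z - w⟫| ≤ C * ‖z - w‖ ^ (1 + β) := by
  obtain ⟨C, hC, hker⟩ := exists_abs_norm_rpow_neg_taylor_le E hp hβ hβ1
  refine ⟨2 * C * rieszBound μ (p + 1 + β) M g, fun z w ↦ ?_⟩
  have hK (v : E) := integrable_norm_rpow_neg_mul hp (by linarith) hg hM v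
  have hV : Integrable (fun y ↦ -p • g y • radialField (p + 1) (w - y)) μ :=
    (integrable_smul_radialField (by linarith) (by linarith) hg hM w).smul (-p)
  have hdiff_int : Integrable (fun y ↦ ‖z - y‖ ^ (-p) * g y - ‖w - y‖ ^ (-p) * g y) μ :=
    (hK z).sub (hK w)
  have hinner_int :
      Integrable (fun y ↦ ⟪z - w, -p • g y • radialField (p + 1) (w - y)⟫) μ := hV.const_inner _
  have hinner : ⟪-p • radialPotential μ (p + 1) g w, z - w⟫
      = ∫ y, ⟪z - w, -p • g y • radialField (p + 1) (w - y)⟫ ∂μ := by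
    rw [integral_inner hV, integral_smul, real_inner_comm, radialPotential]
  have hdiff : rieszPotential μ p g z - rieszPotential μ p g w
      - ⟪-p • radialPotential μ (p + 1) g w, z - w⟫
      = ∫ y, (‖z - y‖ ^ (-p) * g y - ‖w - y‖ ^ (-p) * g y
        - ⟪z - w, -p • g y • radialField (p + 1) (w - y)⟫) ∂μ := by
    rw [hinner, rieszPotential, rieszPotential, ← integral_sub (hK z) (hK w),
      ← integral_sub hdiff_int hinner_int]
  rw [hdiff, ← Real.norm_eq_abs, mul_right_comm, mul_assoc 2]
  refine norm_integral_le_two_mul_rieszBound (by positivity) hpβ hg hM (by positivity) z w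
    fun y hzy hwy ↦ ?_
  have hfactor : ‖z - y‖ ^ (-p) * g y - ‖w - y‖ ^ (-p) * g y
      - ⟪z - w, -p • g y • radialField (p + 1) (w - y)⟫
      = (‖z - y‖ ^ (-p) - ‖w - y‖ ^ (-p)
        - ⟪-p • radialField (p + 1) (w - y), (z - y) - (w - y)⟫) * g y := by
    rw [sub_sub_sub_cancel_right, smul_comm, real_inner_smul_right, real_inner_comm]
    ring
  rw [hfactor, norm_mul, Real.norm_eq_abs, Real.norm_eq_abs, mul_assoc C]
  gcongr
  simpa only [sub_sub_sub_cancel_right] using hker _ _ hzy hwy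

lemma hasGradientAt_rieszPotential (hp : 0 ≤ p) (hpd : p + 1 < Module.finrank ℝ E)
    (hg : Integrable g μ) (hM : ∀ᵐ y ∂μ, |g y| ≤ M) (w : E) :
    HasGradientAt (rieszPotential μ p g) (-p • radialPotential μ (p + 1) g w) w := by
  obtain ⟨β, hβ, hβ1, hpβ⟩ := exists_pos_le_one_add_lt hpd
  obtain ⟨C, hC⟩ := exists_abs_rieszPotential_taylor_le hp β.coe_nonneg hβ1 hpβ hg hM
  exact hasGradientAt_iff_isLittleO.2 (isLittleO_sub_of_norm_le_mul_rpow hβ fun z ↦ hC z w)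

lemma fderiv_rieszPotential (hp : 0 ≤ p) (hpd : p + 1 < Module.finrank ℝ E)
    (hg : Integrable g μ) (hM : ∀ᵐ y ∂μ, |g y| ≤ M) (w : E) :
    fderiv ℝ (rieszPotential μ p g) w
      = InnerProductSpace.toDual ℝ E (-p • radialPotential μ (p + 1) g w) :=
  (hasGradientAt_rieszPotential hp hpd hg hM w).hasFDerivAt.fderiv

lemma norm_fderiv_rieszPotential_le (hp : 0 ≤ p) (hpd : p + 1 < Module.finrank ℝ E)
    (hg : Integrable g μ) (hM : ∀ᵐ y ∂μ, |g y| ≤ M) (w : E) :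
    ‖fderiv ℝ (rieszPotential μ p g) w‖ ≤ p * rieszBound μ (p + 1) M g := by
  rw [fderiv_rieszPotential hp hpd hg hM, LinearIsometryEquiv.norm_map, norm_smul, norm_neg,
    Real.norm_of_nonneg hp]
  gcongr
  exact norm_radialPotential_le (by linarith) hpd hg hM w

lemma exists_holderWith_fderiv_rieszPotential {β : ℝ≥0} (hp : 0 ≤ p) (hβ1 : β ≤ 1)
    (hpβ : p + 1 + β < Module.finrank ℝ E) (hg : Integrable g μ) (hM : ∀ᵐ y ∂μ, |g y| ≤ M) :
    ∃ C, HolderWith C β (fderiv ℝ (rieszPotential μ p g)) := by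
  have hpd : p + 1 < Module.finrank ℝ E := by linarith [β.coe_nonneg]
  refine ⟨_, holderWith_of_dist_le
    (C := p * (2 * (p + 1 + 2) * rieszBound μ (p + 1 + β) M g)) fun w z ↦ ?_⟩
  rw [dist_eq_norm, dist_eq_norm, fderiv_rieszPotential hp hpd hg hM,
    fderiv_rieszPotential hp hpd hg hM, ← map_sub, LinearIsometryEquiv.norm_map, ← smul_sub,
    norm_smul, norm_neg, Real.norm_of_nonneg hp, mul_assoc p]
  gcongr
  refine (norm_radialPotential_sub_le (by linarith) β.coe_nonneg hβ1 hpβ hg hM w z).trans_eq ?_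
  ring

lemma contDiff_one_rieszPotential (hp : 0 ≤ p) (hpd : p + 1 < Module.finrank ℝ E)
    (hg : Integrable g μ) (hM : ∀ᵐ y ∂μ, |g y| ≤ M) : ContDiff ℝ 1 (rieszPotential μ p g) := by
  obtain ⟨β, hβ, hβ1, hpβ⟩ := exists_pos_le_one_add_lt hpd
  obtain ⟨C, hC⟩ := exists_holderWith_fderiv_rieszPotential hp hβ1 hpβ hg hM
  exact contDiff_one_iff_fderiv.2
    ⟨fun w ↦ (hasGradientAt_rieszPotential hp hpd hg hM w).differentiableAt, hC.continuous hβ⟩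

end RieszPotential

section Holder

variable {X F : Type*} [NormedAddCommGroup F] [NormedSpace ℝ F] {φ : X → ℝ} {v : X → F}
  {s : Set X} {r : ℝ≥0}

lemma holderOnWith_smul [PseudoEMetricSpace X] {A B a b : ℝ≥0} (hφ : HolderOnWith A r φ s)
    (hv : HolderOnWith B r v s) (hφa : ∀ x ∈ s, ‖φ x‖₊ ≤ a) (hvb : ∀ x ∈ s, ‖v x‖₊ ≤ b) :
    HolderOnWith (a * B + b * A) r (fun x ↦ φ x • v x) s := fun x hx y hy ↦ by
  have hsplit : φ x • v x - φ y • v y = φ x • (v x - v y) + (φ x - φ y) • v y := by module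
  calc edist (φ x • v x) (φ y • v y)
      ≤ ‖φ x‖ₑ * edist (v x) (v y) + ‖v y‖ₑ * edist (φ x) (φ y) := by
        rw [edist_eq_enorm_sub, edist_eq_enorm_sub, edist_eq_enorm_sub, hsplit,
          mul_comm ‖v y‖ₑ, ← enorm_smul, ← enorm_smul]
        exact enorm_add_le _ _
    _ ≤ a * (B * edist x y ^ (r : ℝ)) + b * (A * edist x y ^ (r : ℝ)) := by
        gcongr
        · exact ENNReal.coe_le_coe.2 (hφa x hx)
        · exact hv x hx y hy
        · exact ENNReal.coe_le_coe.2 (hvb y hy)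
        · exact hφ x hx y hy
    _ = (a * B + b * A : ℝ≥0) * edist x y ^ (r : ℝ) := by
        push_cast
        ring

lemma exists_holderOnWith_smul [PseudoEMetricSpace X] (hs : IsCompact s) (hr : 0 < r)
    (hφ : ∃ A, HolderOnWith A r φ s) (hv : ∃ B, HolderOnWith B r v s) :
    ∃ C, HolderOnWith C r (fun x ↦ φ x • v x) s := by
  obtain ⟨A, hφ⟩ := hφ
  obtain ⟨B, hv⟩ := hv
  obtain ⟨a, ha⟩ := hs.bddAbove_image (hφ.continuousOn hr).nnnorm
  obtain ⟨b, hb⟩ := hs.bddAbove_image (hv.continuousOn hr).nnnorm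
  exact ⟨_, holderOnWith_smul hφ hv (fun x hx ↦ ha (mem_image_of_mem _ hx))
    fun x hx ↦ hb (mem_image_of_mem _ hx)⟩

lemma exists_holderOnWith_of_contDiff [NormedAddCommGroup X] [NormedSpace ℝ X]
    (hv : ContDiff ℝ 1 v) (hs : IsCompact s) (hconv : Convex ℝ s) (hr : r ≤ 1) :
    ∃ C, HolderOnWith C r v s := by
  obtain ⟨K, hK⟩ := hv.contDiffOn.exists_lipschitzOnWith one_ne_zero hconv hs
  exact ⟨_, (holderOnWith_one.2 hK).of_le (D := (ediam s).toNNReal) (fun x hx y hy ↦ by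
    rw [ENNReal.coe_toNNReal hs.isBounded.ediam_ne_top]
    exact edist_le_ediam_of_mem hx hy) hr⟩

lemma exists_holderOnWith_fderiv_mul [NormedAddCommGroup X] [NormedSpace ℝ X] {u : X → ℝ}
    (hφ : ContDiff ℝ 2 φ) (hu : ContDiff ℝ 1 u) (hs : IsCompact s) (hconv : Convex ℝ s)
    (hr : 0 < r) (hr1 : r ≤ 1) (hu' : ∃ C, HolderOnWith C r (fderiv ℝ u) s) :
    ∃ C, HolderOnWith C r (fderiv ℝ fun x ↦ φ x * u x) s := by
  have hφ1 : ContDiff ℝ 1 φ := hφ.of_le one_le_two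
  have hφ' : ContDiff ℝ 1 (fderiv ℝ φ) := hφ.fderiv_right (by norm_num)
  obtain ⟨A, hA⟩ := exists_holderOnWith_smul hs hr
    (exists_holderOnWith_of_contDiff hφ1 hs hconv hr1) hu'
  obtain ⟨B, hB⟩ := exists_holderOnWith_smul hs hr
    (exists_holderOnWith_of_contDiff hu hs hconv hr1)
    (exists_holderOnWith_of_contDiff hφ' hs hconv hr1)
  have hfderiv : (fderiv ℝ fun x ↦ φ x * u x)
      = fun x ↦ φ x • fderiv ℝ u x + u x • fderiv ℝ φ x := funext fun x ↦
    fderiv_fun_mul (hφ1.differentiable one_ne_zero x) (hu.differentiable one_ne_zero x)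
  rw [hfderiv]
  exact ⟨A + B, HolderWith.restrict_iff.1
    ((HolderWith.restrict_iff.2 hA).add (HolderWith.restrict_iff.2 hB))⟩

end Holder

section FDeriv

variable {E F : Type*} [NormedAddCommGroup E] [NormedSpace ℝ E] [NormedAddCommGroup F]
  [NormedSpace ℝ F]

lemma exists_norm_le_mul_norm_of_contDiff [ProperSpace E] {f : E → F} (hf : ContDiff ℝ 1 f)
    (hf0 : f 0 = 0) (R : ℝ) : ∃ L : ℝ, 0 ≤ L ∧ ∀ z ∈ closedBall 0 R, ‖f z‖ ≤ L * ‖z‖ := by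
  obtain ⟨L, hL⟩ := hf.contDiffOn.exists_lipschitzOnWith one_ne_zero (convex_closedBall (0 : E) R)
    (isCompact_closedBall 0 R)
  refine ⟨L, L.coe_nonneg, fun z hz ↦ ?_⟩
  have h0 : (0 : E) ∈ closedBall 0 R := mem_closedBall_self (dist_nonneg.trans hz)
  simpa only [hf0, sub_zero] using hL.norm_sub_le hz h0

lemma abs_mul_add_norm_fderiv_mul_le {φ u : E → ℝ} {z : E} {δ A B : ℝ}
    (hφ : DifferentiableAt ℝ φ z) (hu : DifferentiableAt ℝ u z) (hφδ : |φ z| ≤ δ)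
    (hφδ' : ‖fderiv ℝ φ z‖ ≤ δ) (huA : |u z| ≤ A) (huB : ‖fderiv ℝ u z‖ ≤ B) :
    |φ z * u z| + ‖fderiv ℝ (fun x ↦ φ x * u x) z‖ ≤ δ * (2 * A + B) := by
  have hδ : 0 ≤ δ := (abs_nonneg _).trans hφδ
  have hA : 0 ≤ A := (abs_nonneg _).trans huA
  calc |φ z * u z| + ‖fderiv ℝ (fun x ↦ φ x * u x) z‖
      ≤ |φ z| * |u z| + (|φ z| * ‖fderiv ℝ u z‖ + |u z| * ‖fderiv ℝ φ z‖) := by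
        rw [abs_mul, fderiv_fun_mul hφ hu]
        gcongr
        refine (norm_add_le _ _).trans_eq ?_
        rw [norm_smul, norm_smul, Real.norm_eq_abs, Real.norm_eq_abs]
    _ ≤ δ * A + (δ * B + A * δ) := by gcongr
    _ = δ * (2 * A + B) := by ring

variable {H : Type*} [NormedAddCommGroup H] [NormedSpace ℝ H] {G : F → H} (L : E →ₗᵢ[ℝ] F)

lemma fderiv_comp_linearIsometry {x : E} (hG : DifferentiableAt ℝ G (L x)) :
    fderiv ℝ (fun x ↦ G (L x)) x = (fderiv ℝ G (L x)).comp L.toContinuousLinearMap :=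
  (hG.hasFDerivAt.comp x L.toContinuousLinearMap.hasFDerivAt).fderiv

lemma norm_comp_linearIsometry_le (T : F →L[ℝ] H) :
    ‖T.comp L.toContinuousLinearMap‖ ≤ ‖T‖ :=
  (T.opNorm_comp_le _).trans
    (mul_le_of_le_one_right (norm_nonneg _) L.norm_toContinuousLinearMap_le)

lemma norm_fderiv_comp_linearIsometry_le {x : E} (hG : DifferentiableAt ℝ G (L x)) :
    ‖fderiv ℝ (fun x ↦ G (L x)) x‖ ≤ ‖fderiv ℝ G (L x)‖ := by
  rw [fderiv_comp_linearIsometry L hG]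
  exact norm_comp_linearIsometry_le L _

lemma holderWith_fderiv_comp_linearIsometry {C r : ℝ≥0} (hG : Differentiable ℝ G)
    (hG' : HolderWith C r (fderiv ℝ G)) : HolderWith C r (fderiv ℝ fun x ↦ G (L x)) := by
  rw [← Real.toNNReal_coe (r := C)]
  refine holderWith_of_dist_le fun x y ↦ ?_
  rw [← L.dist_map]
  refine le_trans ?_ (hG'.dist_le (L x) (L y))
  rw [fderiv_comp_linearIsometry L (hG _), fderiv_comp_linearIsometry L (hG _), dist_eq_norm,
    dist_eq_norm, ← ContinuousLinearMap.sub_comp]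
  exact norm_comp_linearIsometry_le L _

end FDeriv

section BoundedSupport

variable {E : Type*} [MeasurableSpace E] {μ : Measure E} {g : E → ℝ} {M : ℝ} {s : Set E}

lemma integrable_of_bounded_of_support_subset (hg : Measurable g) (hs : μ s ≠ ⊤)
    (hgs : Function.support g ⊆ s) (hM : ∀ y, |g y| ≤ M) : Integrable g μ :=
  (integrableOn_iff_integrable_of_support_subset hgs).1 <|
    Measure.integrableOn_of_bounded hs hg.aestronglyMeasurable (ae_of_all _ hM)

lemma integral_abs_le_of_support_subset (hs : μ s ≠ ⊤) (hgs : Function.support g ⊆ s)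
    (hM : ∀ y, |g y| ≤ M) : ∫ y, |g y| ∂μ ≤ M * μ.real s := by
  have hzero (y : E) (hy : y ∉ s) : |g y| = 0 :=
    abs_eq_zero.2 (Function.notMem_support.1 fun hgy ↦ hy (hgs hgy))
  rw [← setIntegral_eq_integral_of_forall_compl_eq_zero hzero]
  refine (Real.le_norm_self _).trans (norm_setIntegral_le_of_norm_le_const hs.lt_top fun y _ ↦ ?_)
  rw [Real.norm_eq_abs, abs_abs]
  exact hM y

lemma rieszBound_le_of_support_subset [NormedAddCommGroup E] (p : ℝ) (hs : μ s ≠ ⊤)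
    (hgs : Function.support g ⊆ s) (hM : ∀ y, |g y| ≤ M) :
    rieszBound μ p M g ≤ (∫ v in ball 0 1, ‖v‖ ^ (-p) ∂μ + μ.real s) * M := by
  rw [rieszBound, add_mul, mul_comm, mul_comm (μ.real s)]
  exact add_le_add_right (integral_abs_le_of_support_subset hs hgs hM) _

end BoundedSupport

section Extension

variable {f : E3 → ℝ} {M R : ℝ}

/-- The embedding `emb` of ℝ³ into ℝ⁵ as a linear isometry. -/
def embIsometry : E3 →ₗᵢ[ℝ] E5 where
  toFun := emb
  map_add' x y := by ext i; fin_cases i <;> simp [emb, mk5]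
  map_smul' c x := by ext i; fin_cases i <;> simp [emb, mk5]
  norm_map' x := by simp [EuclideanSpace.norm_eq, Fin.sum_univ_succ, emb, mk5]

lemma norm_mk3_sqrt (y : E5) :
    ‖mk3 (√((y 0) ^ 2 + (y 1) ^ 2 + (y 2) ^ 2 + (y 3) ^ 2)) 0 (y 4)‖ = ‖y‖ := by
  have hsq : √((y 0) ^ 2 + (y 1) ^ 2 + (y 2) ^ 2 + (y 3) ^ 2) ^ 2
      = (y 0) ^ 2 + (y 1) ^ 2 + (y 2) ^ 2 + (y 3) ^ 2 := Real.sq_sqrt (by positivity)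
  simp [EuclideanSpace.norm_eq, Fin.sum_univ_five, Fin.sum_univ_three, mk3, hsq]

lemma measurable_tilde (hf : Measurable f) : Measurable (tilde f) := by
  refine hf.comp <| (WithLp.measurable_toLp 2 (Fin 3 → ℝ)).comp <| measurable_pi_iff.2 fun i ↦ ?_
  fin_cases i <;> simp only [Fin.zero_eta, Fin.mk_one, Fin.reduceFinMk, Matrix.cons_val] <;>
    fun_prop

lemma support_tilde_subset (hfR : Function.support f ⊆ closedBall 0 R) :
    Function.support (tilde f) ⊆ closedBall 0 R := fun y hy ↦ by
  rw [mem_closedBall_zero_iff, ← norm_mk3_sqrt y]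
  exact mem_closedBall_zero_iff.1 (hfR hy)

lemma integrable_tilde (hf : Measurable f) (hfR : Function.support f ⊆ closedBall 0 R)
    (hM : ∀ x, |f x| ≤ M) : Integrable (tilde f) :=
  integrable_of_bounded_of_support_subset (measurable_tilde hf) measure_closedBall_lt_top.ne
    (support_tilde_subset hfR) fun _ ↦ hM _

/-- The Riesz potential of order 3 of the five-dimensional extension, restricted to ℝ³; it is the
factor which `Linv` multiplies by `C₅ (x₁² + x₂²)`. -/
def axialPotential (f : E3 → ℝ) (x : E3) : ℝ :=
  rieszPotential volume 3 (tilde f) (embIsometry x)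

lemma three_add_one_lt_finrank : (3 : ℝ) + 1 < Module.finrank ℝ E5 := by
  rw [finrank_euclideanSpace_fin]
  norm_num

lemma contDiff_one_axialPotential (hf : Measurable f)
    (hfR : Function.support f ⊆ closedBall 0 R) (hM : ∀ x, |f x| ≤ M) :
    ContDiff ℝ 1 (axialPotential f) :=
  (contDiff_one_rieszPotential zero_le_three three_add_one_lt_finrank
    (integrable_tilde hf hfR hM) (ae_of_all _ fun _ ↦ hM _)).comp embIsometry.contDiff

lemma exists_holderWith_fderiv_axialPotential {β : ℝ≥0} (hβ1 : β < 1) (hf : Measurable f)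
    (hfR : Function.support f ⊆ closedBall 0 R) (hM : ∀ x, |f x| ≤ M) :
    ∃ C, HolderWith C β (fderiv ℝ (axialPotential f)) := by
  have hint := integrable_tilde hf hfR hM
  have hbdd : ∀ᵐ y, |tilde f y| ≤ M := ae_of_all _ fun _ ↦ hM _
  have hβ : (3 : ℝ) + 1 + β < Module.finrank ℝ E5 := by
    rw [finrank_euclideanSpace_fin]
    push_cast
    linarith [NNReal.coe_lt_one.2 hβ1]
  obtain ⟨C, hC⟩ := exists_holderWith_fderiv_rieszPotential zero_le_three hβ1.le hβ hint hbdd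
  exact ⟨C, holderWith_fderiv_comp_linearIsometry embIsometry
    ((contDiff_one_rieszPotential zero_le_three three_add_one_lt_finrank hint
      hbdd).differentiable one_ne_zero) hC⟩

lemma exists_axialPotential_bounds (R : ℝ) : ∃ A B : ℝ, 0 ≤ A ∧ 0 ≤ B ∧
    ∀ f : E3 → ℝ, Measurable f → Function.support f ⊆ closedBall 0 R →
      ∀ M : ℝ, (∀ x, |f x| ≤ M) → ∀ z : E3,
        |axialPotential f z| ≤ A * M ∧ ‖fderiv ℝ (axialPotential f) z‖ ≤ B * M := by
  have hvol : volume (closedBall (0 : E5) R) ≠ ⊤ := measure_closedBall_lt_top.ne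
  refine ⟨(∫ v : E5 in ball 0 1, ‖v‖ ^ (-3 : ℝ)) + volume.real (closedBall (0 : E5) R),
    3 * ((∫ v : E5 in ball 0 1, ‖v‖ ^ (-(3 + 1) : ℝ)) + volume.real (closedBall (0 : E5) R)),
    by positivity, by positivity, fun f hf hfR M hM z ↦ ?_⟩
  have hint := integrable_tilde hf hfR hM
  have hbdd : ∀ y, |tilde f y| ≤ M := fun _ ↦ hM _
  have hriesz (p : ℝ) := rieszBound_le_of_support_subset p hvol (support_tilde_subset hfR) hbdd
  constructor
  · refine (abs_rieszPotential_le zero_le_three ?_ hint (ae_of_all _ hbdd) _).trans (hriesz 3)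
    linarith [three_add_one_lt_finrank]
  · have hdiff := (contDiff_one_rieszPotential zero_le_three three_add_one_lt_finrank hint
      (ae_of_all _ hbdd)).differentiable one_ne_zero
    refine (norm_fderiv_comp_linearIsometry_le embIsometry (hdiff _)).trans ?_
    rw [mul_assoc]
    refine (norm_fderiv_rieszPotential_le zero_le_three three_add_one_lt_finrank hint
      (ae_of_all _ hbdd) _).trans ?_
    gcongr
    exact hriesz (3 + 1)

end Extension

section AxialWeight

/-- The weight `C₅ (x₁² + x₂²)` in front of the potential in `Linv`. -/
def axialWeight (C₅ : ℝ) (x : E3) : ℝ :=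
  C₅ * ((x 0) ^ 2 + (x 1) ^ 2)

lemma Linv_eq_axialWeight_mul (C₅ : ℝ) (f : E3 → ℝ) :
    Linv C₅ f = fun x ↦ axialWeight C₅ x * axialPotential f x := by
  ext x
  have hkernel (y : E5) : ‖embIsometry x - y‖ ^ (-3 : ℝ) = (‖emb x - y‖ ^ 3)⁻¹ := by
    rw [Real.rpow_neg (norm_nonneg _)]
    norm_cast
  simp only [Linv, axialWeight, axialPotential, rieszPotential, hkernel]

lemma contDiff_axialWeight (C₅ : ℝ) {n : WithTop ℕ∞} : ContDiff ℝ n (axialWeight C₅) := by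
  unfold axialWeight
  fun_prop

lemma fderiv_axialWeight_zero (C₅ : ℝ) : fderiv ℝ (axialWeight C₅) 0 = 0 := by
  have hmin : IsLocalMin (fun x : E3 ↦ (x 0) ^ 2 + (x 1) ^ 2) 0 := .of_forall fun x ↦ by
    simpa using add_nonneg (sq_nonneg (x 0)) (sq_nonneg (x 1))
  have hdiff : DifferentiableAt ℝ (fun x : E3 ↦ (x 0) ^ 2 + (x 1) ^ 2) 0 := by fun_prop
  unfold axialWeight
  rw [fderiv_const_mul hdiff, hmin.fderiv_eq_zero, smul_zero]

lemma exists_axialWeight_bound (C₅ R : ℝ) : ∃ L : ℝ, 0 ≤ L ∧ ∀ z ∈ closedBall 0 R,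
    |axialWeight C₅ z| ≤ L * ‖z‖ ∧ ‖fderiv ℝ (axialWeight C₅) z‖ ≤ L * ‖z‖ := by
  have hzero : axialWeight C₅ 0 = 0 := by simp [axialWeight]
  obtain ⟨L₀, hL₀, hweight⟩ :=
    exists_norm_le_mul_norm_of_contDiff (contDiff_axialWeight C₅) hzero R
  obtain ⟨L₁, -, hfderiv⟩ := exists_norm_le_mul_norm_of_contDiff
    ((contDiff_axialWeight C₅ (n := 2)).fderiv_right one_add_one_eq_two.le)
    (fderiv_axialWeight_zero C₅) R
  refine ⟨max L₀ L₁, le_max_of_le_left hL₀, fun z hz ↦ ⟨(hweight z hz).trans ?_,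
    (hfderiv z hz).trans ?_⟩⟩
  · gcongr
    exact le_max_left _ _
  · gcongr
    exact le_max_right _ _

end AxialWeight

theorem Linv_C1beta_and_pointwise_bound_general (C₅ R : ℝ) :
    ∃ C : ℝ, 0 < C ∧
      ∀ f : E3 → ℝ, Measurable f → Function.support f ⊆ closedBall 0 R →
        ∀ M : ℝ, (∀ x, |f x| ≤ M) →
          ContDiff ℝ 1 (Linv C₅ f) ∧
          (∀ β : ℝ, 0 < β → β < 1 →
            ∃ Cβ : ℝ, ∀ x ∈ closedBall 0 R, ∀ y ∈ closedBall 0 R,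
              ‖fderiv ℝ (Linv C₅ f) x - fderiv ℝ (Linv C₅ f) y‖ ≤ Cβ * ‖x - y‖ ^ β) ∧
          ∀ z ∈ closedBall 0 R,
            |Linv C₅ f z| + ‖fderiv ℝ (Linv C₅ f) z‖ ≤ C * M * ‖z‖ := by
  obtain ⟨A, B, hA, hB, hpotential⟩ := exists_axialPotential_bounds R
  obtain ⟨L, hL, hweight⟩ := exists_axialWeight_bound C₅ R
  refine ⟨L * (2 * A + B) + 1, by positivity, fun f hf hfR M hM ↦ ?_⟩
  have hu : ContDiff ℝ 1 (axialPotential f) := contDiff_one_axialPotential hf hfR hM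
  have hφ : ContDiff ℝ 1 (axialWeight C₅) := contDiff_axialWeight C₅
  rw [Linv_eq_axialWeight_mul]
  refine ⟨hφ.mul hu, fun β hβ hβ1 ↦ ?_, fun z hz ↦ ?_⟩
  · lift β to ℝ≥0 using hβ.le
    obtain ⟨C, hC⟩ := exists_holderWith_fderiv_axialPotential hβ1 hf hfR hM
    obtain ⟨Cβ, hCβ⟩ := exists_holderOnWith_fderiv_mul (contDiff_axialWeight C₅) hu
      (isCompact_closedBall 0 R) (convex_closedBall 0 R) hβ hβ1.le ⟨C, hC.holderOnWith _⟩
    refine ⟨Cβ, fun x hx y hy ↦ ?_⟩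
    simpa only [dist_eq_norm] using hCβ.dist_le hx hy
  · have hM0 : 0 ≤ M := (abs_nonneg _).trans (hM 0)
    obtain ⟨hu_le, hu'_le⟩ := hpotential f hf hfR M hM z
    obtain ⟨hφ_le, hφ'_le⟩ := hweight z hz
    calc |axialWeight C₅ z * axialPotential f z|
          + ‖fderiv ℝ (fun x ↦ axialWeight C₅ x * axialPotential f x) z‖
        ≤ L * ‖z‖ * (2 * (A * M) + B * M) :=
          abs_mul_add_norm_fderiv_mul_le (hφ.differentiable one_ne_zero z)
            (hu.differentiable one_ne_zero z) hφ_le hφ'_le hu_le hu'_le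
      _ ≤ (L * (2 * A + B) + 1) * M * ‖z‖ := by
          linarith [mul_nonneg hM0 (norm_nonneg z)]

/-- for f ∈ L∞ axisymmetric, even in x₃ and supported in B̄₂, one has
L⁻¹f ∈ C^{1,β}(B̄₂) for every 0 < β < 1, and there is a constant C > 0 independent of f
such that |(L⁻¹f)(z)| + |∇(L⁻¹f)(z)| ≤ C ‖f‖_{L∞(B₂)} |z| for every z ∈ B₂. -/
theorem Linv_C1beta_and_pointwise_bound :
    ∀ C₅ : ℝ, 0 < C₅ →
      ∃ C : ℝ, 0 < C ∧
        ∀ f : E3 → ℝ, Measurable f → Axisym f → EvenZ f →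
          Function.support f ⊆ closedBall (0:E3) 2 →
          ∀ M : ℝ, (∀ x, |f x| ≤ M) →
            ((∀ β : ℝ, 0 < β → β < 1 →
                ContDiffOn ℝ 1 (Linv C₅ f) (closedBall (0:E3) 2) ∧
                ∃ Cβ : ℝ, ∀ x ∈ closedBall (0:E3) 2, ∀ y ∈ closedBall (0:E3) 2,
                  ‖fderiv ℝ (Linv C₅ f) x - fderiv ℝ (Linv C₅ f) y‖ ≤ Cβ * ‖x - y‖ ^ β)
              ∧ ∀ z ∈ ball (0:E3) 2,
                  |Linv C₅ f z| + ‖fderiv ℝ (Linv C₅ f) z‖ ≤ C * M * ‖z‖) := by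
  intro C₅ _
  obtain ⟨C, hC, hLinv⟩ := Linv_C1beta_and_pointwise_bound_general C₅ 2
  refine ⟨C, hC, fun f hf _ _ hsupp M hM ↦ ?_⟩
  obtain ⟨hdiff, hholder, hbound⟩ := hLinv f hf hsupp M hM
  exact ⟨fun β hβ hβ1 ↦ ⟨hdiff.contDiffOn, hholder β hβ hβ1⟩,
    fun z hz ↦ hbound z (ball_subset_closedBall hz)⟩
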